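/- arXiv:1812.04781 — 3 statements merged into one kernel-verified Lean document; each statement's English description precedes it below -/
import Mathlib

section
/- For every m ≥ 1 and every n ≥ 1 there exist mn homogeneous polynomials f_1, f_2, …, f_{mn} in the invariant ring 𝔽_q[mW]^{GL_n(𝔽_q)} such that the invariant field 𝔽_q(mW)^{GL_n(𝔽_q)} is generated by them: 𝔽_q(mW)^{GL_n(𝔽_q)} = 𝔽_q(f_1, f_2, …, f_{mn}). -/
open MvPolynomial Matrix

set_option maxHeartbeats 1000000
set_option synthInstance.maxHeartbeats 400000

noncomputable section

/-- The polynomial ring `𝔽_q[mW]` in the variables `x_{ij}`, `1 ≤ i ≤ m`, `1 ≤ j ≤ n`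
(indexed here by `(i, j) : Fin m × Fin n`). -/
abbrev PolyMW (F : Type) [Field F] (m n : ℕ) : Type := MvPolynomial (Fin m × Fin n) F

/-- The rational function field `𝔽_q(mW)`. -/
abbrev RatMW (F : Type) [Field F] (m n : ℕ) : Type := FractionRing (PolyMW F m n)

/-- The substitution endomorphism of `𝔽_q[mW]` induced by a matrix `σ`: it transforms each
column vector `X_i = ᵗ(x_{i1},…,x_{in})` by the standard action, `X_i ↦ σ • X_i`. -/
def matSub {F : Type} [Field F] {m n : ℕ} (σ : Matrix (Fin n) (Fin n) F) :
    PolyMW F m n →ₐ[F] PolyMW F m n :=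
  aeval fun v => ∑ l, C (σ v.2 l) * X (v.1, l)

lemma matSub_comp {F : Type} [Field F] {m n : ℕ} (A B : Matrix (Fin n) (Fin n) F) :
    (matSub (F := F) (m := m) (n := n) A).comp (matSub B) = matSub (B * A) := by
  apply MvPolynomial.algHom_ext
  rintro ⟨i, j⟩
  simp only [AlgHom.coe_comp, Function.comp_apply, matSub, aeval_X, map_sum, _root_.map_mul,
    aeval_C, MvPolynomial.algebraMap_eq, Finset.mul_sum]
  rw [Finset.sum_comm]
  refine Finset.sum_congr rfl fun s _ => ?_
  calc ∑ l, C (B j l) * (C (A l s) * X (i, s))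
      = (∑ l, C (B j l * A l s)) * X (i, s) := by
        rw [Finset.sum_mul]
        simp [C_mul, mul_assoc]
    _ = C ((B * A) j s) * X (i, s) := by
        rw [Matrix.mul_apply, map_sum]

lemma matSub_one {F : Type} [Field F] {m n : ℕ} :
    matSub (F := F) (m := m) (n := n) (1 : Matrix (Fin n) (Fin n) F) = AlgHom.id F _ := by
  apply MvPolynomial.algHom_ext
  rintro ⟨i, j⟩
  simp [matSub, Matrix.one_apply, ite_mul, apply_ite (C (σ := Fin m × Fin n) (R := F))]

/-- The algebra automorphism of `𝔽_q[mW]` induced by `σ ∈ GL_n(𝔽_q)`. -/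
def matAut {F : Type} [Field F] {m n : ℕ} (σ : GL (Fin n) F) :
    PolyMW F m n ≃ₐ[F] PolyMW F m n :=
  AlgEquiv.ofAlgHom (matSub (σ : Matrix (Fin n) (Fin n) F))
    (matSub ((↑(σ⁻¹) : Matrix (Fin n) (Fin n) F)))
    (by rw [matSub_comp, σ.inv_mul, matSub_one])
    (by rw [matSub_comp, σ.mul_inv, matSub_one])

/-- The automorphism of `𝔽_q(mW)` induced by the action of `σ ∈ GL_n(𝔽_q)` on `𝔽_q[mW]`. -/
def fracAct {F : Type} [Field F] {m n : ℕ} (σ : GL (Fin n) F) :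
    RatMW F m n →+* RatMW F m n :=
  (IsFractionRing.ringEquivOfRingEquiv
    ((matAut (F := F) (m := m) (n := n) σ).toRingEquiv) :
    RatMW F m n ≃+* RatMW F m n).toRingHom

/-- The fixed subfield `𝔽_q(mW)^G` of a subgroup `G ≤ GL_n(𝔽_q)`. -/
def fixedSubfield (F : Type) [Field F] (m n : ℕ) (G : Subgroup (GL (Fin n) F)) :
    Subfield (RatMW F m n) where
  carrier := {a : RatMW F m n | ∀ σ ∈ G, fracAct σ a = a}
  mul_mem' := fun ha hb σ hσ => by
    rw [(fracAct σ).map_mul, ha σ hσ, hb σ hσ]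
  one_mem' := fun σ hσ => (fracAct σ).map_one
  add_mem' := fun ha hb σ hσ => by
    rw [(fracAct σ).map_add, ha σ hσ, hb σ hσ]
  zero_mem' := fun σ hσ => (fracAct σ).map_zero
  neg_mem' := fun ha σ hσ => by rw [(fracAct σ).map_neg, ha σ hσ]
  inv_mem' := fun a ha σ hσ => by rw [map_inv₀ (fracAct σ), ha σ hσ]

/-- `SL_n(𝔽_q)` as the subgroup of `GL_n(𝔽_q)` of matrices of determinant `1`. -/
def SLsub (F : Type) [Field F] (n : ℕ) : Subgroup (GL (Fin n) F) :=
  MonoidHom.ker (Units.map (Matrix.detMonoidHom (n := Fin n) (R := F)))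

section helpers

/-- Frobenius powers are linear over the finite field. -/
lemma lin_pow_card {F K : Type} [Field F] [Fintype F] [CommRing K] [Algebra F K] {n : ℕ}
    (x : Fin n → K) (v : Fin n → F) (k : ℕ) :
    (∑ j, v j • x j) ^ (Fintype.card F ^ k) = ∑ j, v j • x j ^ (Fintype.card F ^ k) := by
  induction k with
  | zero => simp
  | succ k ih =>
    rw [pow_succ, pow_mul, ih]
    have h := map_sum (FiniteField.frobeniusAlgHom F K)
      (fun j => v j • x j ^ (Fintype.card F ^ k)) Finset.univ
    simp only [map_smul, FiniteField.coe_frobeniusAlgHom] at h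
    rw [h]
    simp [pow_mul]

/-- The combinations of linearly independent elements are distinct. -/
lemma comb_inj {F K : Type} [Field F] [Field K] [Algebra F K] {n : ℕ}
    (x : Fin n → K) (hx : LinearIndependent F x) :
    Function.Injective (fun v : Fin n → F => ∑ j, v j • x j) := by
  intro v w h
  have h' : ∑ j, (v - w) j • x j = 0 := by
    simp only [Pi.sub_apply, sub_smul, Finset.sum_sub_distrib]
    exact sub_eq_zero.mpr h
  funext j
  exact sub_eq_zero.mp (Fintype.linearIndependent_iff.mp hx _ h' j)

/-- The Moore determinant does not vanish on linearly independent elements. -/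
lemma moore_det_ne_zero {F K : Type} [Field F] [Fintype F] [Field K] [Algebra F K] {n : ℕ}
    (x : Fin n → K) (hx : LinearIndependent F x) :
    (Matrix.of fun j k : Fin n => x j ^ (Fintype.card F ^ (k : ℕ))).det ≠ 0 := by
  intro h0
  obtain ⟨a, ha0, ha⟩ := Matrix.exists_mulVec_eq_zero_iff.mpr h0
  have hroot : ∀ j, ∑ k : Fin n, a k * x j ^ (Fintype.card F ^ (k : ℕ)) = 0 := by
    intro j
    have := congrFun ha j
    simpa [Matrix.mulVec, dotProduct, mul_comm] using this
  set p : Polynomial K :=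
    ∑ k : Fin n, Polynomial.C (a k) * Polynomial.X ^ (Fintype.card F ^ (k : ℕ)) with hp
  have hq : 1 < Fintype.card F := Fintype.one_lt_card
  have hn : 0 < n := by
    rcases Nat.eq_zero_or_pos n with rfl | h
    · exact absurd (Subsingleton.elim a 0) ha0
    · exact h
  have hp0 : p = 0 := by
    refine Polynomial.eq_zero_of_natDegree_lt_card_of_eval_eq_zero p (comb_inj x hx) ?_ ?_
    · intro v
      rw [hp, Polynomial.eval_finsetSum]
      simp only [Polynomial.eval_mul, Polynomial.eval_C, Polynomial.eval_pow, Polynomial.eval_X,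
        lin_pow_card]
      simp only [Finset.mul_sum]
      rw [Finset.sum_comm]
      refine Finset.sum_eq_zero fun j _ => ?_
      simp only [mul_smul_comm]
      rw [← Finset.smul_sum, hroot, smul_zero]
    · simp only [Fintype.card_fun, Fintype.card_fin]
      refine lt_of_le_of_lt (Polynomial.natDegree_sum_le_of_forall_le (n := Fintype.card F ^ (n - 1)) _ _ ?_)
        (Nat.pow_lt_pow_right hq (by omega))
      intro k _
      refine (Polynomial.natDegree_C_mul_X_pow_le _ _).trans ?_
      exact Nat.pow_le_pow_right (by omega) (by omega)
  apply ha0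
  funext k
  have := congrArg (fun r => Polynomial.coeff r (Fintype.card F ^ (k : ℕ))) hp0
  simp only [hp, Polynomial.finsetSum_coeff, Polynomial.coeff_C_mul, Polynomial.coeff_X_pow,
    Polynomial.coeff_zero] at this
  rw [Finset.sum_eq_single k] at this
  · simpa using this
  · intro b _ hb
    rw [if_neg, mul_zero]
    intro h
    exact hb (Fin.ext (Nat.pow_right_injective hq h).symm)
  · simp

lemma eq_prod_of_roots {K ι : Type} [Field K] [Fintype ι] (Q : Polynomial K) (hQ : Q.Monic)
    (g : ι → K) (hg : Function.Injective g) (hd : Q.natDegree = Fintype.card ι)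
    (hr : ∀ i, Q.eval (g i) = 0) : Q = ∏ i, (Polynomial.X - Polynomial.C (g i)) := by
  have hm : (∏ i, (Polynomial.X - Polynomial.C (g i))).Monic :=
    Polynomial.monic_prod_of_monic _ _ fun i _ => Polynomial.monic_X_sub_C _
  have hdeg : (∏ i, (Polynomial.X - Polynomial.C (g i))).natDegree = Fintype.card ι := by
    rw [Polynomial.natDegree_prod_of_monic _ _ fun i _ => Polynomial.monic_X_sub_C _]
    simp
  refine Polynomial.eq_of_monic_of_dvd_of_natDegree_le hm hQ ?_ (by rw [hd, hdeg])
  refine Finset.prod_dvd_of_coprime ?_ ?_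
  · intro i _ j _ hij
    exact Polynomial.isCoprime_X_sub_C_of_isUnit_sub (sub_ne_zero.mpr (hg.ne hij)).isUnit
  · intro i _
    exact Polynomial.dvd_iff_isRoot.mpr (hr i)

/-- The Galois theoretic core. -/
lemma galois_core {F K : Type} [Field F] [Fintype F] [Field K] [Algebra F K] {n : ℕ}
    (E : IntermediateField F K)
    (x : Fin n → K) (hx : LinearIndependent F x) (c : Fin n → E)
    (hc : ∀ j, x j ^ (Fintype.card F ^ n) =
      ∑ k : Fin n, (c k : K) * x j ^ (Fintype.card F ^ (k : ℕ)))
    (htop : IntermediateField.adjoin E (Set.range x) = ⊤) :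
    (∀ a : K, (∀ τ : K ≃ₐ[E] K, τ a = a) → a ∈ E) ∧
    (∀ (τ : K ≃ₐ[E] K) (j : Fin n), ∃ v : Fin n → F, τ (x j) = ∑ l, v l • x l) := by
  have hq : 1 < Fintype.card F := Fintype.one_lt_card
  set R : Polynomial E :=
    ∑ k : Fin n, Polynomial.C (c k) * Polynomial.X ^ (Fintype.card F ^ (k : ℕ)) with hR
  set P : Polynomial E := Polynomial.X ^ (Fintype.card F ^ n) - R with hP
  have hRd : R.degree < ((Fintype.card F ^ n : ℕ) : WithBot ℕ) := by
    refine (Polynomial.degree_sum_le _ _).trans_lt ?_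
    rw [Finset.sup_lt_iff (WithBot.bot_lt_coe _)]
    intro k _
    refine (Polynomial.degree_C_mul_X_pow_le _ _).trans_lt ?_
    exact_mod_cast Nat.pow_lt_pow_right hq k.2
  have hPm : P.Monic := Polynomial.monic_X_pow_sub hRd
  have hPd : P.natDegree = Fintype.card F ^ n := by
    apply Polynomial.natDegree_eq_of_degree_eq_some
    rw [hP, Polynomial.degree_sub_eq_left_of_degree_lt] <;> rw [Polynomial.degree_X_pow]
    exact hRd
  have hev : ∀ y : K, Polynomial.aeval y P = y ^ (Fintype.card F ^ n) -
      ∑ k : Fin n, (c k : K) * y ^ (Fintype.card F ^ (k : ℕ)) := by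
    intro y
    simp [hP, hR, IntermediateField.algebraMap_apply]
  have hroot : ∀ v : Fin n → F, Polynomial.aeval (∑ j, v j • x j) P = 0 := by
    intro v
    rw [hev]
    simp only [lin_pow_card, hc, Finset.mul_sum, Finset.smul_sum]
    rw [Finset.sum_comm, sub_eq_zero]
    refine Finset.sum_congr rfl fun k _ => Finset.sum_congr rfl fun j _ => ?_
    rw [mul_smul_comm]
  have hfac : P.map (algebraMap E K) =
      ∏ v : Fin n → F, (Polynomial.X - Polynomial.C (∑ j, v j • x j)) := by
    refine eq_prod_of_roots _ (hPm.map _) _ (comb_inj x hx) ?_ ?_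
    · rw [hPm.natDegree_map, hPd]; simp
    · intro v
      rw [Polynomial.eval_map_algebraMap, hroot]
  have hsplit : (P.map (algebraMap E K)).Splits := by
    rw [hfac]
    exact Polynomial.Splits.prod fun v _ => Polynomial.Splits.X_sub_C _
  have hsep : P.Separable := by
    rw [← Polynomial.separable_map (algebraMap E K), hfac]
    exact Polynomial.separable_prod_X_sub_C_iff.mpr (comb_inj x hx)
  have hsf : P.IsSplittingField E K := by
    rw [isSplittingField_iff_intermediateField]
    refine ⟨hsplit, ?_⟩
    rw [eq_top_iff, ← htop]
    refine IntermediateField.adjoin.mono _ _ _ ?_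
    rintro _ ⟨j, rfl⟩
    rw [Polynomial.mem_rootSet]
    refine ⟨hPm.ne_zero, ?_⟩
    rw [hev, hc, sub_self]
  have hgal : IsGalois E K := IsGalois.of_separable_splitting_field hsep
  have hfd : FiniteDimensional E K := Polynomial.IsSplittingField.finiteDimensional K P
  constructor
  · intro a ha
    have := (IsGalois.mem_bot_iff_fixed (F := E) a).mpr ha
    obtain ⟨b, hb⟩ := IntermediateField.mem_bot.mp this
    rw [← hb]
    exact b.2
  · intro τ j
    have h0 : Polynomial.aeval (τ (x j)) P = 0 := by
      rw [Polynomial.aeval_algHom_apply τ (x j) P, hev, hc, sub_self, map_zero]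
    rw [← Polynomial.eval_map_algebraMap, hfac, Polynomial.eval_prod, Finset.prod_eq_zero_iff] at h0
    obtain ⟨v, -, hv⟩ := h0
    refine ⟨v, ?_⟩
    rwa [Polynomial.eval_sub, Polynomial.eval_X, Polynomial.eval_C, sub_eq_zero] at hv

end helpers
section gens

/-- The transposed Moore matrix of the vector `X_{i0}`. -/
def genM (F : Type) [Field F] [Fintype F] {m n : ℕ} (i0 : Fin m) :
    Matrix (Fin n) (Fin n) (PolyMW F m n) :=
  Matrix.of fun j k => X (i0, j) ^ (Fintype.card F ^ (k : ℕ))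

/-- The right hand sides. -/
def genY (F : Type) [Field F] [Fintype F] {m n : ℕ} (i0 i : Fin m) (j : Fin n) : PolyMW F m n :=
  if i = i0 then X (i0, j) ^ (Fintype.card F ^ n) else X (i, j)

/-- The generators. -/
def genf (F : Type) [Field F] [Fintype F] {m n : ℕ} (i0 : Fin m) (k0 : Fin n)
    (i : Fin m) (k : Fin n) : PolyMW F m n :=
  if i = i0 ∧ k = k0 then (genM F (n := n) i0).det ^ (Fintype.card F - 1)
  else (genM F i0).det ^ (Fintype.card F - 2) * (genM F i0).cramer (genY F i0 i) k

lemma det_homog {F τ : Type} [Field F] {n : ℕ} (M : Matrix (Fin n) (Fin n) (MvPolynomial τ F))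
    (d : Fin n → ℕ) (h : ∀ j k, (M j k).IsHomogeneous (d k)) :
    M.det.IsHomogeneous (∑ k, d k) := by
  rw [Matrix.det_apply]
  refine IsHomogeneous.sum _ _ _ fun σ _ => ?_
  have h1 : (∏ i, M (σ i) i).IsHomogeneous (∑ k, d k) :=
    IsHomogeneous.prod _ _ _ fun i _ => h _ _
  rcases Int.units_eq_one_or (Equiv.Perm.sign σ) with hs | hs
  · rw [hs, one_smul]; exact h1
  · rw [hs, Units.neg_smul, one_smul]; exact h1.neg

lemma genM_homog (F : Type) [Field F] [Fintype F] {m n : ℕ} (i0 : Fin m) (j k : Fin n) :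
    (genM F i0 j k).IsHomogeneous (Fintype.card F ^ (k : ℕ)) := by
  simpa [genM] using (isHomogeneous_X F (i0, j)).pow (Fintype.card F ^ (k : ℕ))

lemma genY_homog (F : Type) [Field F] [Fintype F] {m n : ℕ} (i0 i : Fin m) (j : Fin n) :
    (genY F i0 i j).IsHomogeneous (if i = i0 then Fintype.card F ^ n else 1) := by
  unfold genY
  split_ifs with h
  · simpa using (isHomogeneous_X F (i0, j)).pow (Fintype.card F ^ n)
  · exact isHomogeneous_X F (i, j)

lemma genf_homog (F : Type) [Field F] [Fintype F] {m n : ℕ} (i0 : Fin m) (k0 : Fin n)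
    (i : Fin m) (k : Fin n) : ∃ d : ℕ, (genf F i0 k0 i k).IsHomogeneous d := by
  have hdet := det_homog (genM F (n := n) i0) _ (fun j k => genM_homog F i0 j k)
  unfold genf
  split_ifs
  · exact ⟨_, hdet.pow _⟩
  · refine ⟨_, (hdet.pow _).mul (n := ∑ l : Fin n, if l = k then
        (if i = i0 then Fintype.card F ^ n else 1) else Fintype.card F ^ (l : ℕ)) ?_⟩
    · rw [Matrix.cramer_apply]
      refine det_homog _ _ fun j l => ?_
      rw [Matrix.updateCol_apply]
      split_ifs with h1 h2
      · simpa [h2] using genY_homog F i0 i j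
      · simpa [h2] using genY_homog F i0 i j
      · exact genM_homog F i0 j l

lemma cramer_equivariant {R : Type} [CommRing R] {n : ℕ} (φ : R →+* R)
    (M S : Matrix (Fin n) (Fin n) R) (Y : Fin n → R)
    (hM : φ.mapMatrix M = S * M) (hY : φ ∘ Y = S *ᵥ Y) (k : Fin n) :
    φ (M.cramer Y k) = S.det * M.cramer Y k := by
  have h : φ ∘ (M.cramer Y) = S.det • M.cramer Y := by
    rw [Matrix.cramer_eq_adjugate_mulVec]
    have h1 : φ ∘ (M.adjugate *ᵥ Y) = (φ.mapMatrix M.adjugate) *ᵥ (φ ∘ Y) := by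
      funext j
      exact RingHom.map_mulVec φ _ _ j
    rw [h1, RingHom.map_adjugate, hM, hY, Matrix.adjugate_mul_distrib, Matrix.mulVec_mulVec,
      Matrix.mul_assoc, Matrix.adjugate_mul, Matrix.mul_smul, Matrix.mul_one, Matrix.smul_mulVec]
  exact congrFun h k

lemma matSub_X_pow {F : Type} [Field F] [Fintype F] {m n : ℕ}
    (σ : Matrix (Fin n) (Fin n) F) (i : Fin m) (j : Fin n) (k : ℕ) :
    matSub σ (X (i, j) ^ (Fintype.card F ^ k) : PolyMW F m n) =
      ∑ l, C (σ j l) * X (i, l) ^ (Fintype.card F ^ k) := by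
  rw [map_pow, matSub, aeval_X]
  simp only [← MvPolynomial.smul_eq_C_mul]
  exact lin_pow_card (fun l => (X (i, l) : PolyMW F m n)) (σ j) k

lemma genM_matSub {F : Type} [Field F] [Fintype F] {m n : ℕ}
    (σ : Matrix (Fin n) (Fin n) F) (i0 : Fin m) :
    (matSub σ : PolyMW F m n →ₐ[F] PolyMW F m n).toRingHom.mapMatrix (genM F i0) =
      (C : F →+* PolyMW F m n).mapMatrix σ * genM F i0 := by
  ext1 j k
  simp only [RingHom.mapMatrix_apply, Matrix.map_apply, Matrix.mul_apply, genM, Matrix.of_apply]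
  exact matSub_X_pow σ i0 j k

lemma genY_matSub {F : Type} [Field F] [Fintype F] {m n : ℕ}
    (σ : Matrix (Fin n) (Fin n) F) (i0 i : Fin m) :
    (matSub σ : PolyMW F m n →ₐ[F] PolyMW F m n).toRingHom ∘ (genY F i0 i) =
      (C : F →+* PolyMW F m n).mapMatrix σ *ᵥ genY F i0 i := by
  funext j
  simp only [RingHom.mapMatrix_apply, Matrix.map_apply, Matrix.mulVec, dotProduct,
    Function.comp_apply]
  by_cases h : i = i0
  · simp only [genY, if_pos h]
    exact matSub_X_pow σ i0 j n
  · simp only [genY, if_neg h]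
    have := matSub_X_pow (m := m) σ i j 0
    simp only [pow_zero, pow_one] at this
    exact this

lemma genf_inv {F : Type} [Field F] [Fintype F] {m n : ℕ} (i0 : Fin m) (k0 : Fin n)
    (i : Fin m) (k : Fin n) (σ : GL (Fin n) F) :
    matSub (σ : Matrix (Fin n) (Fin n) F) (genf F i0 k0 i k) = genf F i0 k0 i k := by
  have hq : 1 < Fintype.card F := Fintype.one_lt_card
  set s : Matrix (Fin n) (Fin n) F := σ.val with hs
  set φ := (matSub s : PolyMW F m n →ₐ[F] PolyMW F m n) with hφ
  have hdets : s.det ≠ 0 := by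
    have := (Matrix.isUnit_iff_isUnit_det s).mp σ.isUnit
    exact this.ne_zero
  have hpow : (C s.det : PolyMW F m n) ^ (Fintype.card F - 1) = 1 := by
    rw [← C_pow, FiniteField.pow_card_sub_one_eq_one _ hdets, C_1]
  have hS : ((C : F →+* PolyMW F m n).mapMatrix s).det = C s.det := (RingHom.map_det _ _).symm
  have hdet : φ (genM F (n := n) i0).det = C s.det * (genM F i0).det := by
    have h1 := RingHom.map_det φ.toRingHom (genM F (n := n) i0)
    rw [genM_matSub, Matrix.det_mul, hS] at h1
    exact h1
  have hcr : φ ((genM F i0).cramer (genY F i0 i) k) =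
      C s.det * (genM F i0).cramer (genY F i0 i) k := by
    have h1 := cramer_equivariant φ.toRingHom (genM F (n := n) i0) _ (genY F i0 i)
      (genM_matSub s i0) (genY_matSub s i0 i) k
    rw [hS] at h1
    exact h1
  unfold genf
  split_ifs
  · rw [map_pow, hdet, mul_pow, hpow, one_mul]
  · rw [_root_.map_mul, map_pow, hdet, hcr, mul_pow]
    have : (C s.det : PolyMW F m n) ^ (Fintype.card F - 2) * C s.det = 1 := by
      rw [← pow_succ, ← hpow]
      congr 1
      omega
    linear_combination ((genM F i0).det ^ (Fintype.card F - 2) *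
      (genM F i0).cramer (genY F i0 i) k) * this

lemma genc0 {F : Type} [Field F] [Fintype F] {m n : ℕ} (i0 : Fin m) (k0 : Fin n)
    (hk0 : (k0 : ℕ) = 0) :
    (genM F i0).cramer (genY F i0 i0) k0 = (genM F (n := n) i0).det ^ (Fintype.card F) ∨
    (genM F i0).cramer (genY F i0 i0) k0 = - (genM F (n := n) i0).det ^ (Fintype.card F) := by
  obtain ⟨n, rfl⟩ : ∃ n', n = n' + 1 := ⟨n - 1, by have := k0.2; omega⟩
  obtain rfl : k0 = 0 := Fin.ext hk0
  rw [Matrix.cramer_apply]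
  set U := (genM F i0).updateCol 0 (genY F (n := n + 1) i0 i0) with hU
  have h1 : U.submatrix id (finRotate (n + 1)) =
      (FiniteField.frobeniusAlgHom F (PolyMW F m (n + 1))).toRingHom.mapMatrix (genM F i0) := by
    ext1 j k
    have hR : (FiniteField.frobeniusAlgHom F (PolyMW F m (n + 1))).toRingHom.mapMatrix
        (genM F i0) j k = X (i0, j) ^ (Fintype.card F ^ ((k : ℕ) + 1)) := by
      rw [pow_succ, pow_mul]
      rfl
    rw [hR, Matrix.submatrix_apply, id, hU, Matrix.updateCol_apply]
    by_cases hk : k = Fin.last n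
    · subst hk
      rw [if_pos (finRotate_last)]
      simp [genY]
    · have hlt : (k : ℕ) < n := by
        have := Fin.val_ne_of_ne hk
        have := k.2
        simp at *
        omega
      have hv : ((finRotate (n + 1) k : Fin (n + 1)) : ℕ) = k + 1 := coe_finRotate_of_ne_last hk
      rw [if_neg]
      · rw [genM, Matrix.of_apply, hv]
      · intro h0
        rw [h0] at hv
        simp at hv
  have h2 := congrArg Matrix.det h1
  rw [Matrix.det_permute', ← RingHom.map_det] at h2
  have h3 : (FiniteField.frobeniusAlgHom F (PolyMW F m (n + 1))).toRingHom
      (genM F (n := n + 1) i0).det = (genM F (n := n + 1) i0).det ^ Fintype.card F := rfl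
  rw [h3] at h2
  rcases Int.units_eq_one_or (Equiv.Perm.sign (finRotate (n + 1))) with hs | hs
  · left
    rw [hs] at h2
    simpa using h2
  · right
    rw [hs] at h2
    rw [← h2]
    simp

lemma fracAct_algebraMap {F : Type} [Field F] {m n : ℕ} (σ : GL (Fin n) F) (p : PolyMW F m n) :
    fracAct σ (algebraMap (PolyMW F m n) (RatMW F m n) p) =
      algebraMap (PolyMW F m n) (RatMW F m n) (matSub (σ : Matrix (Fin n) (Fin n) F) p) := by
  exact IsFractionRing.ringEquivOfRingEquiv_algebraMap _ _

end gens
section final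

lemma gen_le_fixed {F : Type} [Field F] [Fintype F] {m n : ℕ} (f : Fin (m * n) → PolyMW F m n)
    (hf : ∀ i, ∀ σ : GL (Fin n) F, matSub (σ : Matrix (Fin n) (Fin n) F) (f i) = f i) :
    (IntermediateField.adjoin F
          (Set.range fun i =>
            algebraMap (PolyMW F m n) (RatMW F m n) (f i))).toSubfield ≤ fixedSubfield F m n ⊤ := by
  intro a ha
  have ha' : a ∈ IntermediateField.adjoin F
          (Set.range fun i => algebraMap (PolyMW F m n) (RatMW F m n) (f i)) := ha
  induction ha' using IntermediateField.adjoin_induction with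
  | mem x hx =>
    obtain ⟨i, rfl⟩ := hx
    intro σ _
    simp only
    rw [fracAct_algebraMap, hf]
  | algebraMap c =>
    intro σ _
    rw [IsScalarTower.algebraMap_apply F (PolyMW F m n) (RatMW F m n), fracAct_algebraMap,
      AlgHom.commutes]
  | add x y hx hy h1 h2 => exact add_mem (h1 hx) (h2 hy)
  | inv x hx h1 => exact inv_mem (h1 hx)
  | mul x y hx hy h1 h2 => exact mul_mem (h1 hx) (h2 hy)

lemma fixed_le_gen {F : Type} [Field F] [Fintype F] {m n : ℕ} (i0 : Fin m) (k0 : Fin n)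
    (hk0 : (k0 : ℕ) = 0) (E : IntermediateField F (RatMW F m n))
    (hE : ∀ i k, algebraMap (PolyMW F m n) (RatMW F m n) (genf F i0 k0 i k) ∈ E) 
    (a : RatMW F m n) (ha : ∀ σ : GL (Fin n) F, fracAct σ a = a) : a ∈ E := by
  have hq : 1 < Fintype.card F := Fintype.one_lt_card
  set ι := algebraMap (PolyMW F m n) (RatMW F m n) with hι
  have hιinj : Function.Injective ι := IsFractionRing.injective _ _
  have hιC : ∀ c : F, ι (C c) = algebraMap F (RatMW F m n) c := by
    intro c
    rw [IsScalarTower.algebraMap_apply F (PolyMW F m n) (RatMW F m n)]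
    rfl
  set x : Fin n → RatMW F m n := fun j => ι (X (i0, j)) with hxdef
  have hx : LinearIndependent F x := by
    have h1 : LinearIndependent F (fun j : Fin n => (X (i0, j) : PolyMW F m n)) :=
      (MvPolynomial.linearIndependent_X (Fin m × Fin n) F).comp (fun j => (i0, j))
        (fun a b h => (Prod.ext_iff.mp h).2)
    exact h1.map' (IsScalarTower.toAlgHom F (PolyMW F m n) (RatMW F m n)).toLinearMap
      (LinearMap.ker_eq_bot.mpr hιinj)
  set A : Matrix (Fin n) (Fin n) (RatMW F m n) :=
    Matrix.of fun j k : Fin n => x j ^ (Fintype.card F ^ (k : ℕ)) with hA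
  have hAdet : A.det ≠ 0 := moore_det_ne_zero x hx
  set d : RatMW F m n := ι (genM F (n := n) i0).det with hd
  have hdA : d = A.det := by
    rw [hd, RingHom.map_det]
    congr 1
    ext1 j k
    simp [genM, hA, hxdef]
  have hd0 : d ≠ 0 := hdA ▸ hAdet
  have hdE : d ^ (Fintype.card F - 1) ∈ E := by
    have := hE i0 k0
    simpa [genf] using this
  set b : Fin m → Fin n → RatMW F m n :=
    fun i k => ι ((genM F i0).cramer (genY F i0 i) k) / d with hb
  have hbE : ∀ i k, b i k ∈ E := by
    intro i k
    by_cases h : i = i0 ∧ k = k0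
    · obtain ⟨rfl, rfl⟩ := h
      have hd2 : d ^ (Fintype.card F) / d = d ^ (Fintype.card F - 1) := by
        rw [div_eq_iff hd0, ← pow_succ]
        congr 1
        omega
      rcases genc0 (F := F) i k hk0 with h | h
      · have : b i k = d ^ (Fintype.card F - 1) := by
          rw [hb]
          simp only
          rw [h, map_pow, ← hd, hd2]
        rw [this]; exact hdE
      · have : b i k = - d ^ (Fintype.card F - 1) := by
          rw [hb]
          simp only
          rw [h, map_neg, map_pow, ← hd, neg_div, hd2]
        rw [this]; exact neg_mem hdE
    · have h1 := hE i k
      rw [genf, if_neg h, _root_.map_mul, map_pow, ← hd] at h1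
      have h2 : b i k = d ^ (Fintype.card F - 2) * ι ((genM F i0).cramer (genY F i0 i) k) /
          d ^ (Fintype.card F - 1) := by
        rw [hb]
        simp only
        rw [div_eq_div_iff hd0 (pow_ne_zero _ hd0)]
        have : Fintype.card F - 1 = (Fintype.card F - 2) + 1 := by omega
        rw [this, pow_succ]
        ring
      rw [h2]
      exact div_mem h1 hdE
  have hsolve : ∀ i j, ι (genY F i0 i j) =
      ∑ k : Fin n, b i k * x j ^ (Fintype.card F ^ (k : ℕ)) := by
    intro i j
    have h1 := congrArg ι (congrFun (Matrix.mulVec_cramer (genM F i0) (genY F i0 i)) j)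
    simp only [Matrix.mulVec, dotProduct, Pi.smul_apply, smul_eq_mul, map_sum, _root_.map_mul,
      ← hd] at h1
    apply mul_left_cancel₀ hd0
    rw [← h1, Finset.mul_sum]
    refine Finset.sum_congr rfl fun k _ => ?_
    have : ι (genM F i0 j k) = x j ^ (Fintype.card F ^ (k : ℕ)) := by
      simp [genM, hxdef]
    rw [this, hb]
    field_simp
  have hXi : ∀ i, i ≠ i0 → ∀ j, ι (X (i, j)) =
      ∑ k : Fin n, b i k * x j ^ (Fintype.card F ^ (k : ℕ)) := by
    intro i hi j
    rw [← hsolve, genY, if_neg hi]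
  have htop : IntermediateField.adjoin E (Set.range x) = ⊤ := by
    rw [eq_top_iff]
    rintro y -
    have hpoly : ∀ p : PolyMW F m n, ι p ∈ IntermediateField.adjoin E (Set.range x) := by
      have hxmem : ∀ j, x j ∈ IntermediateField.adjoin E (Set.range x) := fun j =>
        IntermediateField.subset_adjoin _ _ ⟨j, rfl⟩
      have hEmem : ∀ e ∈ E, e ∈ IntermediateField.adjoin E (Set.range x) := fun e he =>
        IntermediateField.algebraMap_mem _ (⟨e, he⟩ : E)
      intro p
      induction p using MvPolynomial.induction_on with
      | C c =>
        rw [hιC]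
        exact hEmem _ (E.algebraMap_mem c)
      | add p q hp hq => rw [map_add]; exact add_mem hp hq
      | mul_X p v hp =>
        rw [_root_.map_mul]
        refine mul_mem hp ?_
        obtain ⟨i, j⟩ := v
        by_cases hi : i = i0
        · subst hi; exact hxmem j
        · rw [hXi i hi]
          exact sum_mem fun k _ => mul_mem (hEmem _ (hbE i k)) (pow_mem (hxmem j) _)
    obtain ⟨p, q, -, rfl⟩ := IsFractionRing.div_surjective (A := PolyMW F m n) y
    exact div_mem (hpoly p) (hpoly q)
  obtain ⟨hfix, hspan⟩ := galois_core E x hx (fun k => ⟨b i0 k, hbE i0 k⟩) (by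
    intro j
    have := hsolve i0 j
    rw [genY, if_pos rfl, map_pow] at this
    exact this) htop
  refine hfix a fun τ => ?_
  choose s hs using hspan τ
  have hτF : ∀ c : F, τ (algebraMap F (RatMW F m n) c) = algebraMap F (RatMW F m n) c := by
    intro c
    exact τ.commutes (algebraMap F E c)
  have hτE : ∀ e ∈ E, τ e = e := fun e he => τ.commutes (⟨e, he⟩ : E)
  have hpowτ : ∀ j k, τ (x j ^ (Fintype.card F ^ k)) =
      ∑ l, algebraMap F (RatMW F m n) (s j l) * x l ^ (Fintype.card F ^ k) := by
    intro j k
    rw [map_pow, hs, lin_pow_card]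
    simp only [Algebra.smul_def]
  have hdets : (Matrix.of s).det ≠ 0 := by
    have h1 : (τ : RatMW F m n →+* RatMW F m n).mapMatrix A =
        (algebraMap F (RatMW F m n)).mapMatrix (Matrix.of s) * A := by
      ext1 j k
      rw [Matrix.mul_apply]
      exact hpowτ j k
    have h2 := congrArg Matrix.det h1
    rw [← RingHom.map_det, Matrix.det_mul, ← RingHom.map_det] at h2
    intro h0
    rw [h0, map_zero, zero_mul] at h2
    exact hAdet ((map_eq_zero _).mp h2)
  set σ : GL (Fin n) F := Matrix.GeneralLinearGroup.mkOfDetNeZero (Matrix.of s) hdets with hσ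
  have hσv : ∀ j l, (σ : Matrix (Fin n) (Fin n) F) j l = s j l := fun j l => rfl
  have hlin : ∀ i j, fracAct σ (ι (X (i, j))) =
      ∑ l, algebraMap F (RatMW F m n) (s j l) * ι (X (i, l)) := by
    intro i j
    rw [fracAct_algebraMap, matSub, aeval_X, map_sum]
    refine Finset.sum_congr rfl fun l _ => ?_
    rw [_root_.map_mul, hιC, hσv]
  have hEq : (τ : RatMW F m n →+* RatMW F m n) = fracAct σ := by
    refine IsLocalization.ringHom_ext (nonZeroDivisors (PolyMW F m n)) ?_
    refine MvPolynomial.ringHom_ext ?_ ?_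
    · intro c
      change τ (ι (C c)) = fracAct σ (ι (C c))
      rw [fracAct_algebraMap, ← MvPolynomial.algebraMap_eq, AlgHom.commutes,
        MvPolynomial.algebraMap_eq, hιC, hτF]
    · rintro ⟨i, j⟩
      change τ (ι (X (i, j))) = fracAct σ (ι (X (i, j)))
      rw [hlin]
      by_cases hi : i = i0
      · subst hi
        have := hpowτ j 0
        simp only [pow_zero, pow_one] at this
        exact this
      · simp only [hXi i hi, map_sum, _root_.map_mul, hpowτ, Finset.mul_sum]
        rw [Finset.sum_comm]
        refine Finset.sum_congr rfl fun l _ => Finset.sum_congr rfl fun k _ => ?_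
        rw [hτE _ (hbE i k)]
        ring
  calc τ a = (τ : RatMW F m n →+* RatMW F m n) a := rfl
    _ = a := by rw [hEq, ha]

end final

/-- For every `m, n ≥ 1` there exist `mn` homogeneous polynomials in the invariant ring
`𝔽_q[mW]^{GL_n(𝔽_q)}` that generate the invariant field `𝔽_q(mW)^{GL_n(𝔽_q)}` over `𝔽_q`. -/
theorem invariant_field_gen_GL (F : Type) [Field F] [Fintype F] (m n : ℕ)
    (hm : 1 ≤ m) (hn : 1 ≤ n) :
    ∃ f : Fin (m * n) → PolyMW F m n,
      (∀ i, (∃ d : ℕ, (f i).IsHomogeneous d) ∧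
        (∀ σ : GL (Fin n) F, matSub (σ : Matrix (Fin n) (Fin n) F) (f i) = f i)) ∧
      fixedSubfield F m n ⊤ =
        (IntermediateField.adjoin F
          (Set.range fun i =>
            algebraMap (PolyMW F m n) (RatMW F m n) (f i))).toSubfield := by
  obtain ⟨e⟩ : Nonempty (Fin (m * n) ≃ Fin m × Fin n) := ⟨finProdFinEquiv.symm⟩
  have hinv := fun (i : Fin (m * n)) (σ : GL (Fin n) F) =>
    genf_inv (F := F) (⟨0, hm⟩ : Fin m) (⟨0, hn⟩ : Fin n) (e i).1 (e i).2 σ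
  refine ⟨fun i => genf F ⟨0, hm⟩ ⟨0, hn⟩ (e i).1 (e i).2,
    fun i => ⟨genf_homog F _ _ _ _, hinv i⟩, le_antisymm ?_ (gen_le_fixed _ hinv)⟩
  intro a ha
  refine fixed_le_gen (⟨0, hm⟩ : Fin m) (⟨0, hn⟩ : Fin n) rfl _ ?_ a (fun σ => ha σ trivial)
  intro i k
  refine IntermediateField.subset_adjoin _ _ ⟨e.symm (i, k), ?_⟩
  simp

end
end

section
/- Let n = 1 and m ≥ 1, so that GL_1(𝔽_q) = 𝔽_q^× acts on 𝔽_q(x_{11}, x_{21}, …, x_{m1}) by simultaneous scalar multiplication of all variables. Then the fixed field equals 𝔽_q(x_{11}^{q-1}, x_{21}/x_{11}, x_{31}/x_{11}, …, x_{m1}/x_{11}). -/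
open MvPolynomial Matrix

set_option maxHeartbeats 1000000
set_option synthInstance.maxHeartbeats 400000

noncomputable section

lemma fracAct_X {F : Type} [Field F] {m : ℕ} (σ : GL (Fin 1) F) (i : Fin m) :
    fracAct σ (algebraMap (PolyMW F m 1) (RatMW F m 1) (X (i, 0))) =
      algebraMap F (RatMW F m 1) ((σ : Matrix (Fin 1) (Fin 1) F) 0 0) *
      algebraMap (PolyMW F m 1) (RatMW F m 1) (X (i, 0)) := by
  rw [fracAct_algebraMap, IsScalarTower.algebraMap_apply F (PolyMW F m 1) (RatMW F m 1),
    ← _root_.map_mul]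
  simp [matSub, MvPolynomial.algebraMap_eq]

lemma fracAct_C {F : Type} [Field F] {m n : ℕ} (σ : GL (Fin n) F) (c : F) :
    fracAct σ (algebraMap F (RatMW F m n) c) = algebraMap F (RatMW F m n) c := by
  rw [IsScalarTower.algebraMap_apply F (PolyMW F m n) (RatMW F m n), fracAct_algebraMap,
    AlgHom.commutes]

lemma gl_one_ne {F : Type} [Field F] (σ : GL (Fin 1) F) :
    (σ : Matrix (Fin 1) (Fin 1) F) 0 0 ≠ 0 := by
  have h : IsUnit (σ : Matrix (Fin 1) (Fin 1) F).det :=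
    (Matrix.isUnit_iff_isUnit_det _).1 σ.isUnit
  rw [Matrix.det_fin_one] at h
  exact h.ne_zero

def scal {F : Type} [Field F] (u : Fˣ) : GL (Fin 1) F :=
  Units.map (Matrix.scalar (Fin 1)).toMonoidHom u

lemma scal_apply {F : Type} [Field F] (u : Fˣ) :
    (scal u : Matrix (Fin 1) (Fin 1) F) 0 0 = u := by
  simp [scal]

lemma X_ne' {F : Type} [Field F] {m : ℕ} (i : Fin m) :
    algebraMap (PolyMW F m 1) (RatMW F m 1) (X (i, 0)) ≠ 0 := by
  rw [Ne, FaithfulSMul.algebraMap_eq_zero_iff]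
  exact X_ne_zero _

theorem rank_one_case (F : Type) [Field F] [Fintype F] (m : ℕ) (hm : 1 ≤ m) :
    fixedSubfield F m 1 ⊤ =
      (IntermediateField.adjoin F
        ({algebraMap (PolyMW F m 1) (RatMW F m 1) (X (⟨0, hm⟩, 0)) ^ (Fintype.card F - 1)} ∪
         {a : RatMW F m 1 | ∃ i : Fin m, i ≠ ⟨0, hm⟩ ∧
            a = algebraMap (PolyMW F m 1) (RatMW F m 1) (X (i, 0)) /
              algebraMap (PolyMW F m 1) (RatMW F m 1) (X (⟨0, hm⟩, 0))})).toSubfield := by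
  classical
  set S : Set (RatMW F m 1) := ({algebraMap (PolyMW F m 1) (RatMW F m 1) (X (⟨0, hm⟩, 0)) ^ (Fintype.card F - 1)} ∪
         {a : RatMW F m 1 | ∃ i : Fin m, i ≠ ⟨0, hm⟩ ∧
            a = algebraMap (PolyMW F m 1) (RatMW F m 1) (X (i, 0)) /
              algebraMap (PolyMW F m 1) (RatMW F m 1) (X (⟨0, hm⟩, 0))}) with hS
  set t := algebraMap (PolyMW F m 1) (RatMW F m 1) (X (⟨0, hm⟩, 0)) with ht
  have ht0 : t ≠ 0 := X_ne' _
  set K := IntermediateField.adjoin F S with hK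
  have hq : 0 < Fintype.card F - 1 := by
    have := Fintype.one_lt_card (α := F)
    omega
  have htK : t ^ (Fintype.card F - 1) ∈ K :=
    IntermediateField.subset_adjoin F S (Or.inl rfl)
  have hiK : ∀ i : Fin m, algebraMap (PolyMW F m 1) (RatMW F m 1) (X (i, 0)) / t ∈ K := by
    intro i
    by_cases hi : i = ⟨0, hm⟩
    · subst hi
      rw [← ht, div_self ht0]
      exact one_mem _
    · exact IntermediateField.subset_adjoin F S (Or.inr ⟨i, hi, rfl⟩)
  -- easy inclusion
  have hle : ∀ a ∈ K, ∀ σ : GL (Fin 1) F, fracAct σ a = a := by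
    intro a ha σ
    have hs := gl_one_ne σ
    induction ha using IntermediateField.adjoin_induction with
    | mem x hx =>
      rcases hx with hx | ⟨i, -, hx⟩
      · rw [Set.mem_singleton_iff] at hx
        rw [hx, map_pow, fracAct_X, mul_pow, ← map_pow, FiniteField.pow_card_sub_one_eq_one _ hs,
          map_one, one_mul]
      · rw [hx, map_div₀, fracAct_X, fracAct_X]
        rw [mul_div_mul_left]
        exact (map_ne_zero _).2 hs
    | algebraMap x => exact fracAct_C σ x
    | add x y _ _ hx hy => rw [map_add, hx, hy]
    | inv x _ hx => rw [map_inv₀, hx]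
    | mul x y _ _ hx hy => rw [_root_.map_mul, hx, hy]
  -- generation
  have htop : ∀ a : RatMW F m 1, a ∈ IntermediateField.adjoin K {t} := by
    have htm : t ∈ IntermediateField.adjoin K {t} := IntermediateField.mem_adjoin_simple_self K t
    have hKm : ∀ x ∈ K, x ∈ IntermediateField.adjoin K {t} := fun x hx =>
      (IntermediateField.adjoin K {t}).algebraMap_mem ⟨x, hx⟩
    have hp : ∀ p : PolyMW F m 1, algebraMap (PolyMW F m 1) (RatMW F m 1) p ∈
        IntermediateField.adjoin K {t} := by
      intro p
      induction p using MvPolynomial.induction_on with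
      | C c =>
        apply hKm
        have := K.algebraMap_mem c
        rwa [IsScalarTower.algebraMap_apply F (PolyMW F m 1) (RatMW F m 1)] at this
      | add p r hp hr => rw [map_add]; exact add_mem hp hr
      | mul_X p i hp =>
        rw [_root_.map_mul]
        refine mul_mem hp ?_
        obtain ⟨i, j⟩ := i
        obtain rfl : j = 0 := Subsingleton.elim _ _
        rw [← div_mul_cancel₀ (algebraMap (PolyMW F m 1) (RatMW F m 1) (X (i, 0))) ht0]
        exact mul_mem (hKm _ (hiK i)) htm
    intro a
    obtain ⟨p, r, -, rfl⟩ := IsFractionRing.div_surjective (A := PolyMW F m 1) a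
    exact div_mem (hp p) (hp r)
  have halg : IsAlgebraic K t := by
    have h1 : IsAlgebraic K (t ^ (Fintype.card F - 1)) :=
      isAlgebraic_algebraMap (⟨_, htK⟩ : K)
    exact (isAlgebraic_iff_isIntegral.1 h1).of_pow hq |>.isAlgebraic
  have htop2 : ∀ a : RatMW F m 1, a ∈ Algebra.adjoin K {t} := by
    intro a
    rw [← IntermediateField.adjoin_simple_toSubalgebra_of_isAlgebraic halg]
    exact htop a
  have key : ∀ a : RatMW F m 1, ∑ u : Fˣ, fracAct (scal u) a ∈ K := by
    intro a
    have ha := htop2 a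
    rw [← Subalgebra.mem_toSubmodule, Algebra.adjoin_eq_span] at ha
    induction ha using Submodule.span_induction with
    | mem x hx =>
      obtain ⟨k, rfl⟩ := Submonoid.mem_closure_singleton.1 hx
      have : ∑ u : Fˣ, fracAct (scal u) (t ^ k) =
          algebraMap F (RatMW F m 1) (∑ u : Fˣ, (u ^ k : F)) * t ^ k := by
        rw [map_sum, Finset.sum_mul]
        refine Finset.sum_congr rfl fun u _ => ?_
        rw [map_pow, ht, fracAct_X, mul_pow, scal_apply, map_pow]
      rw [this, FiniteField.sum_pow_units]
      split_ifs with h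
      · obtain ⟨j, rfl⟩ := h
        rw [pow_mul]
        exact mul_mem (K.algebraMap_mem _) (pow_mem htK j)
      · rw [map_zero, zero_mul]
        exact zero_mem _
    | zero => simp
    | add x y _ _ hx hy =>
      simp only [map_add, Finset.sum_add_distrib]
      exact add_mem hx hy
    | smul c x _ hx =>
      have : ∑ u : Fˣ, fracAct (scal u) (c • x) = c * ∑ u : Fˣ, fracAct (scal u) x := by
        rw [Finset.mul_sum]
        refine Finset.sum_congr rfl fun u _ => ?_
        rw [show c • x = (c : RatMW F m 1) * x from rfl, _root_.map_mul, hle _ c.2]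
      rw [this]
      exact mul_mem c.2 hx
  ext a
  constructor
  · intro ha
    have h := key a
    have h2 : ∑ u : Fˣ, fracAct (scal u) a = -a := by
      rw [Finset.sum_congr rfl fun u _ => ha (scal u) (Subgroup.mem_top _)]
      have h3 : ((Fintype.card Fˣ : F)) = -1 := by
        have := FiniteField.sum_pow_units F 0
        simpa using this
      have h4 : ((Fintype.card Fˣ : RatMW F m 1)) = -1 := by
        have := congrArg (algebraMap F (RatMW F m 1)) h3
        simpa only [map_natCast, map_neg, map_one] using this
      rw [Finset.sum_const, nsmul_eq_mul, Finset.card_univ, h4, neg_one_mul]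
    rw [h2] at h
    exact neg_mem_iff.1 h
  · intro ha σ _
    exact hle a ha σ

end
end

section
/- Let V be a faithful k-dimensional representation of a finite group H over a field 𝔽 and let G ≤ H be a subgroup. Suppose there exist f_1,…,f_k ∈ 𝔽(V)^G with 𝔽(V)^G = 𝔽(f_1,…,f_k), and there exists a homogeneous polynomial f ∈ 𝔽[f_1,…,f_k] ∩ 𝔽[V]^G such that 𝔽[f_1,…,f_k][f^{-1}] ⊆ 𝔽[V]^G[f^{-1}] inside 𝔽(V). If 𝔽[V]^G[f^{-1}] is integral over 𝔽[f_1,…,f_k][f^{-1}], then 𝔽[V]^G[f^{-1}] = 𝔽[f_1,…,f_k][f^{-1}]. -/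
open MvPolynomial Matrix

set_option maxHeartbeats 1000000
set_option synthInstance.maxHeartbeats 400000

noncomputable section

/-- The polynomial ring `𝔽[V]` of a `k`-dimensional representation `V`:
a polynomial ring in `k` variables. -/
abbrev PolyV (F : Type) [Field F] (k : ℕ) : Type := MvPolynomial (Fin k) F

/-- The rational function field `𝔽(V)`. -/
abbrev RatV (F : Type) [Field F] (k : ℕ) : Type := FractionRing (PolyV F k)

/-- The substitution endomorphism of `𝔽[V]` induced by a matrix `σ`. -/
def matSubV {F : Type} [Field F] {k : ℕ} (σ : Matrix (Fin k) (Fin k) F) :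
    PolyV F k →ₐ[F] PolyV F k :=
  aeval fun j => ∑ l, C (σ j l) * X l

lemma matSubV_comp {F : Type} [Field F] {k : ℕ} (A B : Matrix (Fin k) (Fin k) F) :
    (matSubV (F := F) A).comp (matSubV B) = matSubV (B * A) := by
  apply MvPolynomial.algHom_ext
  intro j
  simp only [AlgHom.coe_comp, Function.comp_apply, matSubV, aeval_X, map_sum, _root_.map_mul,
    aeval_C, MvPolynomial.algebraMap_eq, Finset.mul_sum]
  rw [Finset.sum_comm]
  refine Finset.sum_congr rfl fun s _ => ?_
  calc ∑ l, C (B j l) * (C (A l s) * X s)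
      = (∑ l, C (B j l * A l s)) * X s := by
        rw [Finset.sum_mul]
        simp [C_mul, mul_assoc]
    _ = C ((B * A) j s) * X s := by
        rw [Matrix.mul_apply, map_sum]

lemma matSubV_one {F : Type} [Field F] {k : ℕ} :
    matSubV (F := F) (1 : Matrix (Fin k) (Fin k) F) = AlgHom.id F _ := by
  apply MvPolynomial.algHom_ext
  intro j
  simp [matSubV, Matrix.one_apply, ite_mul, apply_ite (C (σ := Fin k) (R := F))]

/-- The algebra automorphism of `𝔽[V]` induced by `σ ∈ GL_k(𝔽)`. -/
def matAutV {F : Type} [Field F] {k : ℕ} (σ : GL (Fin k) F) :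
    PolyV F k ≃ₐ[F] PolyV F k :=
  AlgEquiv.ofAlgHom (matSubV (σ : Matrix (Fin k) (Fin k) F))
    (matSubV ((↑(σ⁻¹) : Matrix (Fin k) (Fin k) F)))
    (by rw [matSubV_comp, σ.inv_mul, matSubV_one])
    (by rw [matSubV_comp, σ.mul_inv, matSubV_one])

/-- The automorphism of `𝔽(V)` induced by `σ ∈ GL_k(𝔽)`. -/
def fracActV {F : Type} [Field F] {k : ℕ} (σ : GL (Fin k) F) :
    RatV F k →+* RatV F k :=
  (IsFractionRing.ringEquivOfRingEquiv
    ((matAutV (F := F) (k := k) σ).toRingEquiv) :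
    RatV F k ≃+* RatV F k).toRingHom

lemma aux_intClosed {F K : Type} [Field F] [Field K] [Algebra F K] (A : Subalgebra F K)
    [IsIntegrallyClosed A] (s : Set K) (hA : A = Algebra.adjoin F s) (q : K) (hq : q ∈ A)
    (hq0 : q ≠ 0) (x : K)
    (hx : x ∈ IntermediateField.adjoin F s)
    (hint : IsIntegral ↥(Algebra.adjoin F (s ∪ {q⁻¹})) x) :
    x ∈ Algebra.adjoin F (s ∪ {q⁻¹}) := by
  set B := Algebra.adjoin F (s ∪ {q⁻¹}) with hB
  have hAB : A ≤ B := hA ▸ Algebra.adjoin_mono Set.subset_union_left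
  letI : Algebra A B := (Subalgebra.inclusion hAB).toRingHom.toAlgebra
  have key : ∀ b ∈ B, ∃ n : ℕ, b * q ^ n ∈ A := by
    intro b hb
    induction hb using Algebra.adjoin_induction with
    | mem y hy =>
      rcases hy with hy | hy
      · exact ⟨0, by simpa [hA] using Algebra.subset_adjoin hy⟩
      · refine ⟨1, ?_⟩
        rw [Set.mem_singleton_iff] at hy
        subst hy
        simp [hq0, one_mem]
    | algebraMap r => exact ⟨0, by simpa using A.algebraMap_mem r⟩
    | add a b _ _ ha hb =>
      obtain ⟨n, hn⟩ := ha
      obtain ⟨m, hm⟩ := hb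
      refine ⟨n + m, ?_⟩
      have : (a + b) * q ^ (n + m) = (a * q ^ n) * q ^ m + (b * q ^ m) * q ^ n := by ring
      rw [this]
      exact add_mem (mul_mem hn (pow_mem hq _)) (mul_mem hm (pow_mem hq _))
    | mul a b _ _ ha hb =>
      obtain ⟨n, hn⟩ := ha
      obtain ⟨m, hm⟩ := hb
      refine ⟨n + m, ?_⟩
      have : (a * b) * q ^ (n + m) = (a * q ^ n) * (b * q ^ m) := by ring
      rw [this]
      exact mul_mem hn hm
  have hqi : q⁻¹ ∈ B := Algebra.subset_adjoin (Set.mem_union_right _ rfl)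
  let q' : A := ⟨q, hq⟩
  have hloc : IsLocalization.Away q' B := by
    refine ⟨?_, ?_, ?_⟩
    · rintro ⟨y, n, rfl⟩
      refine IsUnit.of_mul_eq_one ((⟨q⁻¹, hqi⟩ : B) ^ n) ?_
      apply Subtype.ext
      change q ^ n * (q⁻¹) ^ n = 1
      rw [← mul_pow, mul_inv_cancel₀ hq0, one_pow]
    · rintro ⟨b, hb⟩
      obtain ⟨n, hn⟩ := key b hb
      refine ⟨(⟨_, hn⟩, ⟨q' ^ n, n, rfl⟩), ?_⟩
      apply Subtype.ext
      rfl
    · intro a b hab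
      refine ⟨1, ?_⟩
      have := congrArg Subtype.val hab
      have h2 : (a : K) = b := this
      rw [Subtype.ext h2]
  have : IsIntegrallyClosed B := by
    refine isIntegrallyClosed_of_isLocalization B (Submonoid.powers q') ?_
    refine powers_le_nonZeroDivisors_of_noZeroDivisors ?_
    intro h
    exact hq0 (congrArg Subtype.val h)
  rw [IntermediateField.mem_adjoin_iff_div] at hx
  obtain ⟨r, hr, t, ht, rfl⟩ := hx
  let φ : FractionRing B →ₐ[B] K := IsFractionRing.liftAlgHom (g := Algebra.ofId B K)
    (by exact Subtype.val_injective)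
  have hrB : r ∈ B := hAB (hA ▸ hr)
  have htB : t ∈ B := hAB (hA ▸ ht)
  have hφ : φ (algebraMap B _ ⟨r, hrB⟩ / algebraMap B _ ⟨t, htB⟩) = r / t := by
    rw [map_div₀, φ.commutes, φ.commutes]
    rfl
  rw [← hφ, isIntegral_algHom_iff φ φ.toRingHom.injective] at hint
  obtain ⟨y, hy⟩ := IsIntegrallyClosed.algebraMap_eq_of_integral hint
  rw [← hφ, ← hy, φ.commutes]
  exact y.2

lemma aux_algebraMap {F : Type} [Field F] {k : ℕ} (σ : GL (Fin k) F) (r : PolyV F k) :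
    fracActV σ (algebraMap _ (RatV F k) r)
      = algebraMap _ (RatV F k) (matSubV (σ : Matrix (Fin k) (Fin k) F) r) := by
  unfold fracActV
  simp only [RingEquiv.toRingHom_eq_coe, RingHom.coe_coe]
  erw [IsFractionRing.ringEquivOfRingEquiv_algebraMap]
  rfl

lemma aux_one {F : Type} [Field F] {k : ℕ} (x : RatV F k) :
    fracActV (1 : GL (Fin k) F) x = x := by
  have : fracActV (1 : GL (Fin k) F) = RingHom.id (RatV F k) := by
    apply IsLocalization.ringHom_ext (nonZeroDivisors (PolyV F k))
    refine RingHom.ext fun r => ?_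
    all_goals
      simp only [RingHom.comp_apply, aux_algebraMap, Units.val_one, matSubV_one]
      rfl
  rw [this]; rfl

lemma aux_mul {F : Type} [Field F] {k : ℕ} (σ τ : GL (Fin k) F) (x : RatV F k) :
    fracActV (σ * τ) x = fracActV τ (fracActV σ x) := by
  have : fracActV (σ * τ) = (fracActV τ).comp (fracActV (k := k) σ) := by
    apply IsLocalization.ringHom_ext (nonZeroDivisors (PolyV F k))
    refine RingHom.ext fun r => ?_
    all_goals
      simp only [RingHom.comp_apply, aux_algebraMap, Units.val_mul, ← matSubV_comp]
      rfl
  rw [this]; rfl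

lemma aux_alg {F : Type} [Field F] {k : ℕ} {H : Type} [Group H] [Finite H]
    (ρ : H →* GL (Fin k) F) (G : Subgroup H) (L : IntermediateField F (RatV F k))
    (hgen : {a : RatV F k | ∀ h ∈ G, fracActV (ρ h) a = a} = ↑L) :
    Algebra.IsAlgebraic L (RatV F k) := by
  letI : MulSemiringAction G (RatV F k) :=
    { smul := fun g x => fracActV (ρ (g : H)⁻¹) x
      one_smul := fun x => by
        change fracActV (ρ ((1 : G) : H)⁻¹) x = x
        simp [aux_one]
      mul_smul := fun g h x => by
        change fracActV (ρ ((g * h : G) : H)⁻¹) x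
          = fracActV (ρ (g : H)⁻¹) (fracActV (ρ (h : H)⁻¹) x)
        rw [← aux_mul, ← map_mul, Subgroup.coe_mul, _root_.mul_inv_rev]
      smul_zero := fun g => map_zero _
      smul_add := fun g => map_add _
      smul_one := fun g => map_one _
      smul_mul := fun g => map_mul _ }
  have hL : ∀ x : RatV F k, x ∈ FixedPoints.subfield G (RatV F k) → x ∈ L := by
    intro x hx
    change x ∈ (L : Set (RatV F k))
    rw [← hgen]
    intro h hh
    have := hx ⟨h⁻¹, inv_mem hh⟩
    change fracActV (ρ (h⁻¹)⁻¹) x = x at this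
    rwa [inv_inv] at this
  constructor
  intro x
  have hi : IsIntegral (FixedPoints.subfield G (RatV F k)) x := FixedPoints.isIntegral G _ x
  obtain ⟨P, hP, hPx⟩ := hi
  let j : FixedPoints.subfield G (RatV F k) →+* L :=
    { toFun := fun y => ⟨y, hL y y.2⟩
      map_one' := rfl
      map_mul' := fun _ _ => rfl
      map_zero' := rfl
      map_add' := fun _ _ => rfl }
  have : IsIntegral L x := by
    refine ⟨P.map j, hP.map j, ?_⟩
    rw [Polynomial.eval₂_map]
    exact hPx
  exact this.isAlgebraic

lemma aux_indep {F : Type} [Field F] {k : ℕ} (f : Fin k → RatV F k)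
    (h : Algebra.IsAlgebraic (IntermediateField.adjoin F (Set.range f)) (RatV F k)) :
    AlgebraicIndependent F f := by
  have h1 : Algebra.IsAlgebraic (Algebra.adjoin F (Set.range f)) (RatV F k) := by
    rwa [← IntermediateField.isAlgebraic_adjoin_iff_top]
  have h2 : Algebra.IsAlgebraic (PolyV F k) (RatV F k) :=
    IsLocalization.isAlgebraic _ (nonZeroDivisors (PolyV F k))
  have hb : IsTranscendenceBasis F (fun i : Fin k => algebraMap (PolyV F k) (RatV F k) (X i)) :=
    (IsTranscendenceBasis.mvPolynomial (Fin k) F).algebraMap_comp (A := RatV F k)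
  exact (Algebra.IsAlgebraic.isTranscendenceBasis_of_le_trdeg_of_finite F f hb.cardinalMk_eq_trdeg.le).1

/-- **A criterion for an invariant ring to be a localized polynomial ring (integral form).**
Let `V` be a faithful `k`-dimensional representation of a finite group `H` over a field `𝔽`
(given by an injective `ρ : H →* GL_k(𝔽)`) and `G ≤ H`.  Suppose `𝔽(V)^G = 𝔽(f_1,…,f_k)`
with `f_1,…,f_k ∈ 𝔽(V)^G`, and `f` is a homogeneous polynomial in
`𝔽[f_1,…,f_k] ∩ 𝔽[V]^G` with `𝔽[f_1,…,f_k][f⁻¹] ⊆ 𝔽[V]^G[f⁻¹]`.  If `𝔽[V]^G[f⁻¹]` is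
integral over `𝔽[f_1,…,f_k][f⁻¹]`, then `𝔽[V]^G[f⁻¹] = 𝔽[f_1,…,f_k][f⁻¹]`. -/
theorem localized_criterion_integral (F : Type) [Field F] (k : ℕ)
    (H : Type) [Group H] [Finite H]
    (ρ : H →* GL (Fin k) F) (hfaithful : Function.Injective ρ)
    (G : Subgroup H)
    (f : Fin k → RatV F k)
    (hfG : ∀ i, ∀ h ∈ G, fracActV (ρ h) (f i) = f i)
    (hgen : {a : RatV F k | ∀ h ∈ G, fracActV (ρ h) a = a} =
      ↑(IntermediateField.adjoin F (Set.range f)))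
    (p : PolyV F k) (dp : ℕ) (hphom : p.IsHomogeneous dp) (hp0 : p ≠ 0)
    (hpG : ∀ h ∈ G, matSubV ((ρ h : GL (Fin k) F) : Matrix (Fin k) (Fin k) F) p = p)
    (hpadj : algebraMap (PolyV F k) (RatV F k) p ∈ Algebra.adjoin F (Set.range f))
    (hsub : Algebra.adjoin F
        (Set.range f ∪ {(algebraMap (PolyV F k) (RatV F k) p)⁻¹}) ≤
      Algebra.adjoin F
        ((algebraMap (PolyV F k) (RatV F k) ''
            {r : PolyV F k | ∀ h ∈ G,
              matSubV ((ρ h : GL (Fin k) F) : Matrix (Fin k) (Fin k) F) r = r}) ∪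
          {(algebraMap (PolyV F k) (RatV F k) p)⁻¹}))
    (hint : ∀ x ∈ Algebra.adjoin F
        ((algebraMap (PolyV F k) (RatV F k) ''
            {r : PolyV F k | ∀ h ∈ G,
              matSubV ((ρ h : GL (Fin k) F) : Matrix (Fin k) (Fin k) F) r = r}) ∪
          {(algebraMap (PolyV F k) (RatV F k) p)⁻¹}),
      IsIntegral
        ↥(Algebra.adjoin F (Set.range f ∪ {(algebraMap (PolyV F k) (RatV F k) p)⁻¹})) x) :
    Algebra.adjoin F
        ((algebraMap (PolyV F k) (RatV F k) ''
            {r : PolyV F k | ∀ h ∈ G,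
              matSubV ((ρ h : GL (Fin k) F) : Matrix (Fin k) (Fin k) F) r = r}) ∪
          {(algebraMap (PolyV F k) (RatV F k) p)⁻¹}) =
      Algebra.adjoin F (Set.range f ∪ {(algebraMap (PolyV F k) (RatV F k) p)⁻¹}) := by
  refine le_antisymm ?_ hsub
  have hind := aux_indep f (aux_alg ρ G _ hgen)
  haveI : IsIntegrallyClosed ↥(Algebra.adjoin F (Set.range f)) :=
    IsIntegrallyClosed.of_equiv hind.aevalEquiv.toRingEquiv
  have hq0 : algebraMap (PolyV F k) (RatV F k) p ≠ 0 := by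
    rwa [Ne, FaithfulSMul.algebraMap_eq_zero_iff]
  intro x hx
  refine aux_intClosed _ _ rfl _ hpadj hq0 x ?_ (hint x hx)
  have hle : Algebra.adjoin F
        ((algebraMap (PolyV F k) (RatV F k) ''
            {r : PolyV F k | ∀ h ∈ G,
              matSubV ((ρ h : GL (Fin k) F) : Matrix (Fin k) (Fin k) F) r = r}) ∪
          {(algebraMap (PolyV F k) (RatV F k) p)⁻¹}) ≤
      (IntermediateField.adjoin F (Set.range f)).toSubalgebra := by
    rw [Algebra.adjoin_le_iff]
    change _ ⊆ (↑(IntermediateField.adjoin F (Set.range f)) : Set (RatV F k))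
    rw [← hgen]
    rintro y (⟨r, hr, rfl⟩ | hy) h hh
    · rw [aux_algebraMap, hr h hh]
    · rw [Set.mem_singleton_iff] at hy
      rw [hy, map_inv₀, aux_algebraMap, hpG h hh]
  exact hle hx


end
end
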